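/- Let d ∈ ℕ, let 0 < a < b be real numbers, let ε > 0, and let p ∈ ℝ[X] be a polynomial of degree at most d such that |p(x)| ≤ ε for all x ∈ [a,b]. Then the derivative of p at 0 satisfies |p'(0)| ≤ ε · ∑_{k=1}^{d} (2/(b−a))^k · a^{k−1} · C_M(d,k) / (k−1)!, where C_M(d,k) = (∏_{j=0}^{k−1} (d² − j²)) / (∏_{j=0}^{k−1} (2j+1)). -/

import Mathlib

/-- The Markov constant `C_M(d,k) = d²(d²−1²)⋯(d²−(k−1)²)/(1·3·5⋯(2k−1))`. -/
noncomputable def markovConst (d k : ℕ) : ℝ :=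
  (∏ j ∈ Finset.range k, ((d : ℝ) ^ 2 - (j : ℝ) ^ 2)) /
    (∏ j ∈ Finset.range k, (2 * (j : ℝ) + 1))

/-!
Among the real polynomials of degree at most `d` that are bounded by `1` on `[-1, 1]`, the Chebyshev
polynomial `T_d` has the largest `m`-th derivative at every point `y ≥ 1`. The decreasing affine map
from `[-1, 1]` onto `[a, b]` sends `y = 1 + 2 (a - x) / (b - a)` to `x`, so this extremal property
bounds `p^{(m)}(x)` for all `x ≤ a` by `ε (2 / (b - a))^m T_d^{(m)}(y)`. Expanding `T_d^{(m)}`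
around `1`, where the `k`-th derivative of `T_d` is `C_M(d, k)`, yields the sum of Markov constants.
-/

section

open Polynomial Set

lemma iterate_derivative_comp_C_mul_X_add_C {R : Type*} [CommSemiring R] (p : R[X]) (u v : R)
    (m : ℕ) :
    derivative^[m] (p.comp (C u * X + C v)) =
      C (u ^ m) * (derivative^[m] p).comp (C u * X + C v) := by
  induction m with
  | zero => simp
  | succ m ih =>
    simp only [Function.iterate_succ_apply', ih, derivative_C_mul, derivative_comp,
      derivative_add, derivative_X, derivative_C, mul_one, add_zero, pow_succ, C_mul, mul_assoc]

section Taylor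

variable {K : Type*} [Field K] [CharZero K]

lemma taylor_coeff_eq_eval_iterate_derivative_div_factorial (f : K[X]) (r : K) (k : ℕ) :
    (taylor r f).coeff k = (derivative^[k] f).eval r / k.factorial := by
  rw [taylor_coeff, ← factorial_smul_hasseDeriv, LinearMap.smul_apply, eval_smul, nsmul_eq_mul,
    mul_div_cancel_left₀ _ (Nat.cast_ne_zero.mpr k.factorial_ne_zero)]

lemma eval_iterate_derivative_add {f : K[X]} {d : ℕ} (hf : f.natDegree ≤ d) (m : ℕ) (r s : K) :
    (derivative^[m] f).eval (r + s) =
      ∑ k ∈ Finset.Icc m d, (derivative^[k] f).eval r / (k - m).factorial * s ^ (k - m) := by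
  rcases lt_or_ge d m with hdm | hmd
  · rw [iterate_derivative_eq_zero (hf.trans_lt hdm), Finset.Icc_eq_empty_of_lt hdm, eval_zero,
      Finset.sum_empty]
  have hdeg : (taylor r (derivative^[m] f)).natDegree < d + 1 - m := by
    have := natDegree_iterate_derivative f m
    rw [natDegree_taylor]
    lia
  rw [add_comm, ← taylor_eval, eval_eq_sum_range' hdeg, ← Finset.Ico_add_one_right_eq_Icc,
    Finset.sum_Ico_eq_sum_range]
  refine Finset.sum_congr rfl fun i _ => ?_
  rw [taylor_coeff_eq_eval_iterate_derivative_div_factorial, Nat.add_sub_cancel_left,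
    ← Function.iterate_add_apply, add_comm i m]

end Taylor

lemma eval_one_iterate_derivative_T_eq_markovConst (d k : ℕ) :
    (derivative^[k] (Chebyshev.T ℝ d)).eval 1 = markovConst d k := by
  rw [Chebyshev.iterate_derivative_T_eval_one_eq_div, markovConst]
  push_cast
  rfl

lemma eval_iterate_derivative_T_one_add (d m : ℕ) (s : ℝ) :
    (derivative^[m] (Chebyshev.T ℝ d)).eval (1 + s) =
      ∑ k ∈ Finset.Icc m d, markovConst d k / (k - m).factorial * s ^ (k - m) := by
  have hdeg : (Chebyshev.T ℝ d).natDegree ≤ d := by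
    rw [Chebyshev.natDegree_T, Int.natAbs_natCast]
  simp only [eval_iterate_derivative_add hdeg, eval_one_iterate_derivative_T_eq_markovConst]

variable {p : ℝ[X]} {d : ℕ} {ε : ℝ}

lemma eval_iterate_derivative_le_mul_T (hε : 0 < ε) (hp : p.natDegree ≤ d)
    (hsmall : ∀ x ∈ Icc (-1) 1, |p.eval x| ≤ ε) (m : ℕ) {y : ℝ} (hy : 1 ≤ y) :
    (derivative^[m] p).eval y ≤ ε * (derivative^[m] (Chebyshev.T ℝ d)).eval y := by
  have hdeg : (C ε⁻¹ * p).degree ≤ d :=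
    degree_le_of_natDegree_le ((natDegree_C_mul_le _ _).trans hp)
  have hbound : ∀ x ∈ Icc (-1) 1, |(C ε⁻¹ * p).eval x| ≤ 1 := fun x hx => by
    rw [eval_C_mul, abs_mul, abs_of_pos (inv_pos.mpr hε), inv_mul_le_one₀ hε]
    exact hsmall x hx
  have := Chebyshev.eval_iterate_derivative_le_of_forall_abs_le_one (k := m) hy hdeg hbound
  rwa [iterate_derivative_C_mul, eval_C_mul, inv_mul_le_iff₀ hε] at this

lemma abs_eval_iterate_derivative_le_mul_T (hε : 0 < ε) (hp : p.natDegree ≤ d)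
    (hsmall : ∀ x ∈ Icc (-1) 1, |p.eval x| ≤ ε) (m : ℕ) {y : ℝ} (hy : 1 ≤ y) :
    |(derivative^[m] p).eval y| ≤ ε * (derivative^[m] (Chebyshev.T ℝ d)).eval y := by
  refine abs_le'.mpr ⟨eval_iterate_derivative_le_mul_T hε hp hsmall m hy, ?_⟩
  rw [← eval_neg, ← iterate_derivative_neg]
  refine eval_iterate_derivative_le_mul_T hε ((natDegree_neg p).trans_le hp) (fun x hx => ?_) m hy
  rw [eval_neg, abs_neg]
  exact hsmall x hx

variable {a b x : ℝ}

lemma abs_eval_iterate_derivative_le_mul_T_of_le_left (hab : a < b) (hx : x ≤ a) (hε : 0 < ε)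
    (hp : p.natDegree ≤ d) (hsmall : ∀ t ∈ Icc a b, |p.eval t| ≤ ε) (m : ℕ) :
    |(derivative^[m] p).eval x| ≤
      ε * (2 / (b - a)) ^ m *
        (derivative^[m] (Chebyshev.T ℝ d)).eval (1 + 2 / (b - a) * (a - x)) := by
  have hlen : 0 < b - a := sub_pos.mpr hab
  set c := (b - a) / 2 with hc
  have hc_pos : 0 < c := half_pos hlen
  have hc_inv : 2 / (b - a) = c⁻¹ := (inv_div _ _).symm
  have hb : b = a + 2 * c := by rw [hc]; ring
  set q := p.comp (C (-c) * X + C (a + c)) with hq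
  set y := 1 + c⁻¹ * (a - x) with hy
  have hq_deg : q.natDegree ≤ d :=
    calc q.natDegree ≤ p.natDegree * (C (-c) * X + C (a + c)).natDegree := natDegree_comp_le
      _ ≤ d * 1 := Nat.mul_le_mul hp natDegree_linear_le
      _ = d := mul_one d
  have hq_small : ∀ t ∈ Icc (-1) 1, |q.eval t| ≤ ε := fun t ht => by
    rw [hq, eval_comp]
    simp only [eval_add, eval_mul, eval_C, eval_X]
    exact hsmall _ ⟨by nlinarith [ht.2], by nlinarith [ht.1, hb]⟩
  have hy_one : 1 ≤ y :=
    le_add_of_nonneg_right (mul_nonneg (inv_nonneg.mpr hc_pos.le) (sub_nonneg.mpr hx))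
  have hq_y : (derivative^[m] q).eval y = (-c) ^ m * (derivative^[m] p).eval x := by
    have hyx : -c * y + (a + c) = x := by rw [hy]; field
    rw [hq, iterate_derivative_comp_C_mul_X_add_C, eval_C_mul, eval_comp]
    simp only [eval_add, eval_mul, eval_C, eval_X, hyx]
  have hq_bound := abs_eval_iterate_derivative_le_mul_T hε hq_deg hq_small m hy_one
  rw [hq_y, abs_mul, abs_pow, abs_neg, abs_of_pos hc_pos, ← le_inv_mul_iff₀ (pow_pos hc_pos m),
    ← inv_pow] at hq_bound
  rwa [hc_inv, mul_right_comm, mul_comm]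

theorem abs_eval_iterate_derivative_le_sum_markovConst (hab : a < b) (hx : x ≤ a) (hε : 0 < ε)
    (hp : p.natDegree ≤ d) (hsmall : ∀ t ∈ Icc a b, |p.eval t| ≤ ε) (m : ℕ) :
    |(derivative^[m] p).eval x| ≤ ε * ∑ k ∈ Finset.Icc m d,
      (2 / (b - a)) ^ k * (a - x) ^ (k - m) * markovConst d k / (k - m).factorial := by
  refine (abs_eval_iterate_derivative_le_mul_T_of_le_left hab hx hε hp hsmall m).trans_eq ?_
  rw [eval_iterate_derivative_T_one_add, mul_assoc, Finset.mul_sum]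
  congr 1
  refine Finset.sum_congr rfl fun k hk => ?_
  rw [← pow_mul_pow_sub _ (Finset.mem_Icc.mp hk).1, mul_pow]
  ring

end

/-- Extrapolating the derivative at `0` of a polynomial small on `[a,b]`. -/
theorem derivative_at_zero_extrapolation (d : ℕ) (a b : ℝ) (ha : 0 < a) (hab : a < b)
    (ε : ℝ) (hε : 0 < ε) (p : Polynomial ℝ) (hp : p.natDegree ≤ d)
    (hsmall : ∀ x ∈ Set.Icc a b, |p.eval x| ≤ ε) :
    |p.derivative.eval 0| ≤ ε * ∑ k ∈ Finset.Icc 1 d,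
      (2 / (b - a)) ^ k * a ^ (k - 1) * markovConst d k / (Nat.factorial (k - 1)) := by
  simpa only [Function.iterate_one, sub_zero] using
    abs_eval_iterate_derivative_le_sum_markovConst hab ha.le hε hp hsmall 1
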